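/- Let n be an even integer with n ≥ 4 and let C ∈ Ω_n. Define X ∈ Ω_n by X_{i,j} = (2(n−1)/(n−2))·μ_element(C) + C_{i,j} − (⟨R_i,C⟩ + ⟨R_j,C⟩)/(n−2) for i ≠ j (and X_{i,i} = 0). Then X ~ C, i.e., ⟨S,X⟩ = ⟨S,C⟩ for every pairing matrix S ∈ 𝕊(n). -/

import Mathlib

open Finset

def hollowSym {n : ℕ} (C : Matrix (Fin n) (Fin n) ℝ) : Prop :=
  C.IsSymm ∧ ∀ i, C i i = 0

noncomputable def innerH {n : ℕ} (X C : Matrix (Fin n) (Fin n) ℝ) : ℝ :=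
  (1 / 2) * ∑ i, ∑ j, X i j * C i j

noncomputable def adjR {n : ℕ} (i : Fin n) : Matrix (Fin n) (Fin n) ℝ :=
  Matrix.of fun k l => if k ≠ l ∧ (i = k ∨ i = l) then 1 else 0

def IsPairing {n : ℕ} (S : Matrix (Fin n) (Fin n) ℝ) : Prop :=
  S.IsSymm ∧ (∀ i, S i i = 0) ∧ (∀ i j, S i j = 0 ∨ S i j = 1) ∧ (∀ i, ∑ j, S i j = 1)

noncomputable def pairings (n : ℕ) : Finset (Matrix (Fin n) (Fin n) ℝ) :=
  (Finset.univ.filter (fun σ : Equiv.Perm (Fin n) => ∀ i, σ i ≠ i ∧ σ (σ i) = i)).image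
    (fun σ => Matrix.of fun i j => if σ i = j then (1 : ℝ) else 0)

noncomputable def pairSum {n : ℕ} (C : Matrix (Fin n) (Fin n) ℝ) : ℝ :=
  ∑ i, ∑ j ∈ Finset.univ.filter (fun j => i < j), C i j

noncomputable def muEl {n : ℕ} (C : Matrix (Fin n) (Fin n) ℝ) : ℝ :=
  (2 / ((n : ℝ) * ((n : ℝ) - 1))) * pairSum C

noncomputable def Jmat (n : ℕ) : Matrix (Fin n) (Fin n) ℝ := Matrix.of fun _ _ => 1

noncomputable def muSum (n : ℕ) (C : Matrix (Fin n) (Fin n) ℝ) : ℝ :=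
  (1 / (Nat.doubleFactorial (n - 1) : ℝ)) * ∑ S ∈ pairings n, innerH S C

noncomputable def sig2El {n : ℕ} (C : Matrix (Fin n) (Fin n) ℝ) : ℝ :=
  (2 / ((n : ℝ) * ((n : ℝ) - 1))) *
    ∑ i, ∑ j ∈ Finset.univ.filter (fun j => i < j), (C i j - muEl C) ^ 2

noncomputable def sig2Sum (n : ℕ) (C : Matrix (Fin n) (Fin n) ℝ) : ℝ :=
  (1 / (Nat.doubleFactorial (n - 1) : ℝ)) *
    ∑ S ∈ pairings n, (innerH S C - muSum n C) ^ 2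

lemma innerH_adjR {n : ℕ} (C : Matrix (Fin n) (Fin n) ℝ) (hC : hollowSym C) (i : Fin n) :
    innerH (adjR i) C = ∑ j, C i j := by
  obtain ⟨hs, hd⟩ := hC
  have h : ∀ k l, adjR i k l * C k l
      = (if i = k then C k l else 0) + (if i = l then C k l else 0) := by
    intro k l
    simp only [adjR, Matrix.of_apply]
    by_cases hkl : k = l
    · subst hkl; simp [hd]
    · by_cases h1 : i = k
      · have h2 : i ≠ l := fun h => hkl (h1.symm.trans h)
        simp [hkl, h1]
      · by_cases h2 : i = l <;> simp [hkl, Ne.symm hkl, h1, h2]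
  unfold innerH
  simp only [h, Finset.sum_add_distrib]
  rw [Finset.sum_comm (f := fun k l => if i = k then C k l else 0)]
  simp only [Finset.sum_ite_eq, Finset.mem_univ, if_true]
  have : ∑ k, C k i = ∑ j, C i j := Finset.sum_congr rfl fun k _ => hs.apply i k
  rw [this]; ring

lemma two_pairSum {n : ℕ} (C : Matrix (Fin n) (Fin n) ℝ) (hC : hollowSym C) :
    2 * pairSum C = ∑ i, ∑ j, C i j := by
  obtain ⟨hs, hd⟩ := hC
  have h : ∀ i j, C i j = (if i < j then C i j else 0) + (if j < i then C j i else 0) := by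
    intro i j
    rcases lt_trichotomy i j with h | h | h
    · simp [h, h.not_gt]
    · subst h; simp [hd]
    · simp [h, h.not_gt, hs.apply i j]
  have e : ∑ i, ∑ j, C i j = ∑ i, ∑ j, ((if i < j then C i j else 0)
      + (if j < i then C j i else 0)) :=
    Finset.sum_congr rfl fun i _ => Finset.sum_congr rfl fun j _ => h i j
  rw [e]
  simp only [Finset.sum_add_distrib]
  rw [Finset.sum_comm (f := fun i j => if j < i then C j i else 0)]
  unfold pairSum
  simp only [Finset.sum_filter]
  ring

theorem stmt16 (n : ℕ) (hn : 4 ≤ n) (he : Even n) (C : Matrix (Fin n) (Fin n) ℝ)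
    (hC : hollowSym C) (X : Matrix (Fin n) (Fin n) ℝ)
    (hX : X = Matrix.of fun i j =>
      if i = j then 0
      else (2 * ((n : ℝ) - 1) / ((n : ℝ) - 2)) * muEl C + C i j
        - (innerH (adjR i) C + innerH (adjR j) C) / ((n : ℝ) - 2)) :
    ∀ S, IsPairing S → innerH S X = innerH S C := by
  intro S hS
  obtain ⟨hs, hd, -, hr⟩ := hS
  have hc : ∀ j, ∑ i, S i j = 1 := fun j => by
    rw [← hr j]; exact Finset.sum_congr rfl fun k _ => hs.apply j k
  have hn' : (4 : ℝ) ≤ n := by exact_mod_cast hn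
  have h0 : (n : ℝ) ≠ 0 := by linarith
  have h1 : (n : ℝ) - 1 ≠ 0 := by linarith
  have h2 : (n : ℝ) - 2 ≠ 0 := by linarith
  have hT := two_pairSum C hC
  have key : ∀ i j, S i j * X i j = S i j * ((2 * ((n : ℝ) - 1) / ((n : ℝ) - 2)) * muEl C)
      + S i j * C i j - (S i j * ((∑ k, C i k) / ((n : ℝ) - 2))
        + S i j * ((∑ k, C j k) / ((n : ℝ) - 2))) := by
    intro i j
    by_cases hij : i = j
    · subst hij; simp [hd]
    · rw [hX]
      simp only [Matrix.of_apply, if_neg hij, innerH_adjR C hC]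
      ring
  unfold innerH
  simp only [key, Finset.sum_add_distrib, Finset.sum_sub_distrib]
  rw [Finset.sum_comm (f := fun i j => S i j * ((∑ k, C j k) / ((n : ℝ) - 2)))]
  simp only [← Finset.sum_mul, hr, hc, one_mul, ← Finset.sum_div, ← hT, muEl]
  simp only [Finset.sum_const, Finset.card_univ, Fintype.card_fin, nsmul_eq_mul]
  field_simp
  ring
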